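/- arXiv:2504.15775 — 2 statements merged into one kernel-verified Lean document; each statement's English description precedes it below -/
import Mathlib

section
/- Let R be a commutative ring. Then every mininjective R-module is injective if and only if R is strongly min-coherent and Artinian. -/
universe u v w v'

section LeftDefs
variable (R : Type u) [Ring R]

/-- A (left) `R`-module `M` is mininjective if every homomorphism from a minimal (left)
ideal `I` of `R` into `M` extends to a homomorphism `R → M`. -/
def IsMininjectiveLeft (M : Type v) [AddCommGroup M] [Module R M] : Prop :=
  ∀ I : Submodule R R, IsAtom I → ∀ f : ↥I →ₗ[R] M,
    ∃ g : R →ₗ[R] M, ∀ x : ↥I, g ↑x = f x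

/-- A (left) `R`-module `M` is min-projective if every short exact sequence
`0 → N → X → M → 0` with `N` mininjective splits (equivalently `Ext¹(M, N) = 0` for
every mininjective `N`). -/
def IsMinProjectiveLeft (M : Type v) [AddCommGroup M] [Module R M] : Prop :=
  ∀ (X : Type (max u v)) [AddCommGroup X] [Module R X] (p : X →ₗ[R] M),
    Function.Surjective p → IsMininjectiveLeft R ↥(LinearMap.ker p) →
      ∃ s : M →ₗ[R] X, p ∘ₗ s = LinearMap.id

/-- `R` is strongly min-coherent if every minimal (left) ideal of `R` is min-projective. -/
def StronglyMinCoherentLeft : Prop :=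
  ∀ I : Submodule R R, IsAtom I → IsMinProjectiveLeft R ↥I

/-- `R` is a quasi V-ring if every simple `R`-module which is not isomorphic to
any ideal of `R` is injective. -/
def QuasiVRingLeft : Prop :=
  ∀ (S : Type v) [AddCommGroup S] [Module R S], IsSimpleModule R S →
    (¬ ∃ I : Submodule R R, Nonempty (S ≃ₗ[R] ↥I)) → Module.Injective R S

/-- `R` is a Kasch ring if every simple `R`-module is isomorphic to an ideal of `R`. -/
def KaschLeft : Prop :=
  ∀ (S : Type v) [AddCommGroup S] [Module R S], IsSimpleModule R S →
    ∃ I : Submodule R R, Nonempty (S ≃ₗ[R] ↥I)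

/-- An `R`-module `M` is almost injective if for every monomorphism `i : A → B` and every
`f : A → M`, either `f` extends to `B`, or there are a nonzero direct summand `D` of `B`
(with projection `π : B → D`) and `h : M → D` with `h ∘ f = π ∘ i`. -/
def IsAlmostInjectiveLeft (M : Type v) [AddCommGroup M] [Module R M] : Prop :=
  ∀ (A B : Type w) [AddCommGroup A] [AddCommGroup B] [Module R A] [Module R B]
    (i : A →ₗ[R] B), Function.Injective i → ∀ f : A →ₗ[R] M,
    (∃ g : B →ₗ[R] M, g ∘ₗ i = f) ∨
    (∃ D : Submodule R B, D ≠ ⊥ ∧ ∃ π : B →ₗ[R] ↥D,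
      π ∘ₗ D.subtype = LinearMap.id ∧ ∃ h : M →ₗ[R] ↥D, h ∘ₗ f = π ∘ₗ i)

/-- `R` is an almost V-ring if every simple `R`-module is almost injective. -/
def AlmostVRingLeft : Prop :=
  ∀ (S : Type v) [AddCommGroup S] [Module R S], IsSimpleModule R S →
    IsAlmostInjectiveLeft.{u, v, w} R S

end LeftDefs

/-!
If every mininjective module is injective, a surjection with mininjective kernel splits, so every
module is min-projective. Since minimal ideals are finitely generated, direct sums of injective
modules are mininjective, hence injective, and `R` is Noetherian by Bass's argument. A nonmaximal
prime `p` would make `R ⧸ p` mininjective (it has no simple submodule), hence injective, hence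
divisible, so `R ⧸ p` would be a field: thus `R` has dimension zero and is Artinian.

Conversely, over a commutative Artinian ring each simple module is isomorphic to a minimal ideal,
so strong min-coherence gives `Ext¹(S, N) = 0` for all simple `S` and mininjective `N`. A map from
an ideal to `N` can then be extended one composition factor at a time until it is defined on `R`.
-/

section Splitting

variable {R : Type u} [Ring R]

theorem exists_rightInverse_of_injective_ker [Small.{v} R] {X : Type v} {M : Type w}
    [AddCommGroup X] [Module R X] [AddCommGroup M] [Module R M] (p : X →ₗ[R] M)
    (hp : Function.Surjective p) [Module.Injective R (LinearMap.ker p)] :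
    ∃ s : M →ₗ[R] X, p ∘ₗ s = LinearMap.id := by
  have retraction : ∃ r, r ∘ₗ (LinearMap.ker p).subtype = LinearMap.id :=
    Module.Injective.extension_property R _ _ _ _ (Submodule.injective_subtype _) LinearMap.id
  exact ((p.exact_subtype_ker_map.split_tfae (Submodule.injective_subtype _) hp).out 0 1).mpr
    retraction

theorem isMinProjectiveLeft_of_forall_injective
    (h : ∀ (N : Type (max u v)) [AddCommGroup N] [Module R N],
      IsMininjectiveLeft R N → Module.Injective R N)
    (M : Type v) [AddCommGroup M] [Module R M] : IsMinProjectiveLeft R M := by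
  intro X _ _ p hp hker
  have := h _ hker
  exact exists_rightInverse_of_injective_ker p hp

end Splitting

theorem exists_linearMap_dfinsupp_of_finite {R : Type u} [Semiring R] {ι : Type w} {M : Type v}
    {E : ι → Type v'} [AddCommMonoid M] [Module R M] [∀ i, AddCommMonoid (E i)]
    [∀ i, Module R (E i)]
    (e : ∀ i, M →ₗ[R] E i) (he : ∀ x, {i | e i x ≠ 0}.Finite) :
    ∃ F : M →ₗ[R] Π₀ i, E i, ∀ x i, F x i = e i x := by
  classical
  let F (x : M) : Π₀ i, E i := DFinsupp.mk (he x).toFinset fun i ↦ e i x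
  have F_apply (x : M) (i : ι) : F x i = e i x := by
    by_cases hi : e i x = 0 <;> simp [F, DFinsupp.mk_apply, hi]
  exact ⟨{ toFun := F
           map_add' := fun x y ↦ by ext i; simp [F_apply]
           map_smul' := fun r x ↦ by ext i; simp [F_apply] }, F_apply⟩

section Noetherian

variable {R : Type u} [Ring R]

theorem IsMininjectiveLeft.of_injective [Small.{v} R] (M : Type v) [AddCommGroup M] [Module R M]
    [Module.Injective R M] : IsMininjectiveLeft R M := by
  intro I _ f
  obtain ⟨g, hg⟩ := Module.Injective.extension_property R M I R I.subtype I.injective_subtype f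
  exact ⟨g, LinearMap.congr_fun hg⟩

theorem IsMininjectiveLeft.dfinsupp {ι : Type w} {M : ι → Type v} [∀ i, AddCommGroup (M i)]
    [∀ i, Module R (M i)] (hM : ∀ i, IsMininjectiveLeft R (M i)) :
    IsMininjectiveLeft R (Π₀ i, M i) := by
  classical
  intro I hI f
  have : IsSimpleModule R I := isSimpleModule_iff_isAtom.mpr hI
  have : Nontrivial I := IsSimpleModule.nontrivial R I
  obtain ⟨a, ha⟩ := exists_ne (0 : I)
  choose g hg using fun i ↦ hM i I hI (DFinsupp.lapply i ∘ₗ f)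
  let e : Π₀ i, M i := DFinsupp.mk (f a).support fun i ↦ g i 1
  have smul_e : (a : R) • e = f a := by
    ext i
    by_cases hi : i ∈ (f a).support
    · have : (a : R) • g i 1 = f a i := by rw [← map_smul, smul_eq_mul, mul_one, hg]; rfl
      simpa [e, DFinsupp.mk_of_mem hi] using this
    · simpa [e, DFinsupp.mk_of_notMem hi] using (DFinsupp.notMem_support_iff.mp hi).symm
  refine ⟨LinearMap.toSpanSingleton R _ e, fun x ↦ ?_⟩
  obtain ⟨r, rfl⟩ := IsSimpleModule.toSpanSingleton_surjective R ha x
  simp [mul_smul, smul_e]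

theorem exists_linearMap_to_injective_ker_eq [Small.{v} R] {M : Type v} [AddCommGroup M]
    [Module R M] (K : Submodule R M) :
    ∃ (E : Type v) (_ : AddCommGroup E) (_ : Module R E) (e : M →ₗ[R] E),
      Module.Injective R E ∧ LinearMap.ker e = K := by
  let Q := ModuleCat.of R (M ⧸ K)
  let E : ModuleCat.{v} R := CategoryTheory.Injective.under Q
  let i : M ⧸ K →ₗ[R] E := (CategoryTheory.Injective.ι Q).hom
  have injective_i : Function.Injective i := (ModuleCat.mono_iff_injective _).mp inferInstance
  have injective_E : Module.Injective R E :=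
    (Module.injective_iff_injective_object R E).mpr (CategoryTheory.Injective.injective_under Q)
  refine ⟨E, inferInstance, inferInstance, i ∘ₗ K.mkQ, injective_E, ?_⟩
  rw [LinearMap.ker_comp_of_ker_eq_bot _ (LinearMap.ker_eq_bot_of_injective injective_i),
    K.ker_mkQ]

theorem isNoetherianRing_of_injective_dfinsupp
    (h : ∀ (E : ℕ → Type u) [∀ n, AddCommGroup (E n)] [∀ n, Module R (E n)],
      (∀ n, Module.Injective R (E n)) → Module.Injective R (Π₀ n, E n)) :
    IsNoetherianRing R := by
  rw [isNoetherianRing_iff, ← monotone_stabilizes_iff_noetherian]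
  intro c
  choose E _ _ e hE ker_e using fun n ↦ exists_linearMap_to_injective_ker_eq (c n)
  have := h E hE
  let I : Submodule R R := ⨆ n, c n
  have finite_support (x : I) : {n | (e n ∘ₗ I.subtype) x ≠ 0}.Finite := by
    obtain ⟨k, hk⟩ := (Submodule.mem_iSup_of_chain c x).mp x.2
    refine (Set.finite_Iio k).subset fun n hn ↦ Set.mem_Iio.mpr (lt_of_not_ge fun hkn ↦ hn ?_)
    exact LinearMap.mem_ker.mp ((ker_e n).ge (c.monotone hkn hk))
  obtain ⟨F, hF⟩ := exists_linearMap_dfinsupp_of_finite _ finite_support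
  obtain ⟨g, hg⟩ :=
    Module.Injective.extension_property R _ _ _ I.subtype I.injective_subtype F
  obtain ⟨N, hN⟩ := (g 1).finite_support.exists_notMem
  have iSup_le : I ≤ c N := by
    intro x hx
    have hgx : g x = x • g 1 := by rw [← map_smul, smul_eq_mul, mul_one]
    have : e N x = g x N := (hF ⟨x, hx⟩ N).symm.trans (by rw [← hg]; rfl)
    rw [← ker_e N, LinearMap.mem_ker, this, hgx, DFinsupp.smul_apply, not_not.mp hN, smul_zero]
  exact ⟨N, fun m hm ↦ le_antisymm (c.monotone hm) ((le_iSup c m).trans iSup_le)⟩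

theorem isNoetherianRing_of_forall_mininjective_injective
    (h : ∀ (M : Type u) [AddCommGroup M] [Module R M],
      IsMininjectiveLeft R M → Module.Injective R M) : IsNoetherianRing R :=
  isNoetherianRing_of_injective_dfinsupp fun E _ _ _ ↦
    h _ (.dfinsupp fun n ↦ .of_injective (E n))

end Noetherian

theorem smul_surjective_of_isSMulRegular {R : Type u} [CommRing R] {M : Type v} [AddCommGroup M]
    [Module R M] [Module.Injective R M] {r : R} (hr : IsSMulRegular M r) :
    Function.Surjective (r • · : M → M) := by
  obtain ⟨h, hh⟩ := Module.Injective.out (LinearMap.lsmul R M r) hr LinearMap.id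
  exact fun x ↦ ⟨h x, by simpa using hh x⟩

section PrimeQuotient

variable {R : Type u} [CommRing R] {p : Ideal R} [p.IsPrime]

theorem mem_of_smul_quotient_eq_zero {r : R} {y : R ⧸ p} (h : r • y = 0) (hy : y ≠ 0) :
    r ∈ p := by
  rw [Algebra.smul_def, mul_eq_zero] at h
  exact Ideal.Quotient.eq_zero_iff_mem.mp (h.resolve_right hy)

theorem isMaximal_of_injective_of_isSimpleModule {S : Type v} [AddCommGroup S] [Module R S]
    [IsSimpleModule R S] (f : S →ₗ[R] R ⧸ p) (hf : Function.Injective f) : p.IsMaximal := by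
  have : Nontrivial S := IsSimpleModule.nontrivial R S
  obtain ⟨x, hx⟩ := exists_ne (0 : S)
  have annihilator_le : Module.annihilator R S ≤ p := fun r hr ↦
    mem_of_smul_quotient_eq_zero (y := f x)
      (by rw [← map_smul, Module.mem_annihilator.mp hr, map_zero])
      ((map_ne_zero_iff f hf).mpr hx)
  have le_annihilator : p ≤ Module.annihilator R S :=
    p.annihilator_quotient.ge.trans (f.annihilator_le_of_injective hf)
  exact le_antisymm annihilator_le le_annihilator ▸ IsSimpleModule.annihilator_isMaximal

theorem isMininjectiveLeft_quotient_of_not_isMaximal (hp : ¬p.IsMaximal) :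
    IsMininjectiveLeft R (R ⧸ p) := by
  intro I hI f
  have : IsSimpleModule R I := isSimpleModule_iff_isAtom.mpr hI
  obtain hf | rfl := f.injective_or_eq_zero
  · exact absurd (isMaximal_of_injective_of_isSimpleModule f hf) hp
  · exact ⟨0, fun _ ↦ rfl⟩

theorem isMaximal_of_injective_quotient [Module.Injective R (R ⧸ p)] : p.IsMaximal := by
  refine Ideal.Quotient.maximal_of_isField p ⟨exists_pair_ne _, mul_comm, fun {a} ha ↦ ?_⟩
  obtain ⟨r, rfl⟩ := Ideal.Quotient.mk_surjective a
  have hr : IsSMulRegular (R ⧸ p) r := .of_right_eq_zero_of_smul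
    fun y hy ↦ by_contra fun hy0 ↦
      ha (Ideal.Quotient.eq_zero_iff_mem.mpr (mem_of_smul_quotient_eq_zero hy hy0))
  exact smul_surjective_of_isSMulRegular hr 1

end PrimeQuotient

theorem isArtinianRing_of_forall_mininjective_injective {R : Type u} [CommRing R]
    (h : ∀ (M : Type u) [AddCommGroup M] [Module R M],
      IsMininjectiveLeft R M → Module.Injective R M) : IsArtinianRing R := by
  have dim_zero : Ring.KrullDimLE 0 R := .mk₀ fun p _ ↦ by
    by_contra hp
    have := h _ (isMininjectiveLeft_quotient_of_not_isMaximal hp)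
    exact hp isMaximal_of_injective_quotient
  exact isArtinianRing_iff_isNoetherianRing_krullDimLE_zero.mpr
    ⟨isNoetherianRing_of_forall_mininjective_injective h, dim_zero⟩

section Pushout

variable {R : Type u} [Ring R] {A : Type v} {N : Type w} {B : Type v'}
  [AddCommGroup A] [Module R A] [AddCommGroup N] [Module R N] [AddCommGroup B] [Module R B]

/-- The pushout of `f : A → N` and `i : A → B`, encoded as the quotient of `N × B` by the
elements `(f a, -i a)`. It turns an extension of `M` by `A` into an extension of `M` by `N`. -/
abbrev LinearPushout (f : A →ₗ[R] N) (i : A →ₗ[R] B) : Type (max w v') :=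
  (N × B) ⧸ LinearMap.range (f.prod (-i))

namespace LinearPushout

variable (f : A →ₗ[R] N) (i : A →ₗ[R] B)

/-- The structure map `N → LinearPushout f i` of the pushout. -/
def inl : N →ₗ[R] LinearPushout f i :=
  Submodule.mkQ _ ∘ₗ LinearMap.inl R N B

/-- The structure map `B → LinearPushout f i` of the pushout. -/
def inr : B →ₗ[R] LinearPushout f i :=
  Submodule.mkQ _ ∘ₗ LinearMap.inr R N B

theorem inl_comp_eq_inr_comp : inl f i ∘ₗ f = inr f i ∘ₗ i := by
  ext a
  exact (Submodule.Quotient.eq _).mpr ⟨a, by simp⟩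

variable {i}

theorem inl_injective (hi : Function.Injective i) : Function.Injective (inl f i) := by
  refine (injective_iff_map_eq_zero _).mpr fun n hn ↦ ?_
  obtain ⟨a, ha⟩ := (Submodule.Quotient.mk_eq_zero _).mp hn
  obtain ⟨rfl, hia⟩ : f a = n ∧ i a = 0 := by simpa using ha
  rw [(map_eq_zero_iff i hi).mp hia, map_zero]

theorem exists_surjective_exact {M : Type*} [AddCommGroup M] [Module R M] {p : B →ₗ[R] M}
    (hp : Function.Surjective p) (hip : Function.Exact i p) :
    ∃ q : LinearPushout f i →ₗ[R] M, Function.Surjective q ∧ Function.Exact (inl f i) q := by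
  have range_le : LinearMap.range (f.prod (-i)) ≤ LinearMap.ker (p ∘ₗ LinearMap.snd R N B) := by
    rintro _ ⟨a, rfl⟩
    simp [hip.apply_apply_eq_zero]
  refine ⟨Submodule.liftQ _ _ range_le, fun m ↦ ?_, fun y ↦ ⟨fun hy ↦ ?_, ?_⟩⟩
  · obtain ⟨b, rfl⟩ := hp m
    exact ⟨inr f i b, rfl⟩
  · obtain ⟨⟨n, b⟩, rfl⟩ := Submodule.mkQ_surjective _ y
    obtain ⟨a, rfl⟩ := (hip b).mp hy
    exact ⟨n + f a, (Submodule.Quotient.eq _).mpr ⟨a, by simp⟩⟩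
  · rintro ⟨n, rfl⟩
    exact map_zero p

end LinearPushout

end Pushout

section Extension

variable {R : Type u} [Ring R]

theorem IsMininjectiveLeft.of_linearEquiv {M : Type v} {N : Type w} [AddCommGroup M] [Module R M]
    [AddCommGroup N] [Module R N] (hM : IsMininjectiveLeft R M) (e : M ≃ₗ[R] N) :
    IsMininjectiveLeft R N := by
  intro I hI f
  obtain ⟨g, hg⟩ := hM I hI (e.symm.toLinearMap ∘ₗ f)
  exact ⟨e.toLinearMap ∘ₗ g, fun x ↦ by simp [hg]⟩

theorem IsMinProjectiveLeft.exists_retraction {M : Type v} {X N : Type (max u v)}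
    [AddCommGroup M] [Module R M] [AddCommGroup X] [Module R X] [AddCommGroup N] [Module R N]
    (hM : IsMinProjectiveLeft R M) (hN : IsMininjectiveLeft R N) {j : N →ₗ[R] X} {q : X →ₗ[R] M}
    (hj : Function.Injective j) (hq : Function.Surjective q) (hjq : Function.Exact j q) :
    ∃ r : X →ₗ[R] N, r ∘ₗ j = LinearMap.id := by
  let e : N ≃ₗ[R] LinearMap.ker q :=
    (LinearEquiv.ofInjective j hj).trans (LinearEquiv.ofEq _ _ hjq.linearMap_ker_eq.symm)
  exact ((hjq.split_tfae hj hq).out 0 1).mp (hM X q hq (hN.of_linearEquiv e))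

theorem IsMinProjectiveLeft.exists_extension {M B : Type v} {A : Type w} {N : Type (max u v)}
    [AddCommGroup M] [Module R M] [AddCommGroup A] [Module R A] [AddCommGroup B] [Module R B]
    [AddCommGroup N] [Module R N] (hM : IsMinProjectiveLeft R M) (hN : IsMininjectiveLeft R N)
    {i : A →ₗ[R] B} {p : B →ₗ[R] M} (hi : Function.Injective i) (hp : Function.Surjective p)
    (hip : Function.Exact i p) (f : A →ₗ[R] N) : ∃ g : B →ₗ[R] N, g ∘ₗ i = f := by
  obtain ⟨q, hq, hexact⟩ := LinearPushout.exists_surjective_exact f hp hip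
  obtain ⟨r, hr⟩ := hM.exists_retraction hN (LinearPushout.inl_injective f hi) hq hexact
  refine ⟨r ∘ₗ LinearPushout.inr f i, ?_⟩
  rw [LinearMap.comp_assoc, ← LinearPushout.inl_comp_eq_inr_comp, ← LinearMap.comp_assoc, hr,
    LinearMap.id_comp]

theorem baer_of_covBy_extension [IsNoetherianRing R] [IsStronglyAtomic (Ideal R)] {N : Type v}
    [AddCommGroup N] [Module R N]
    (h : ∀ (I J : Ideal R) (hIJ : I ⋖ J) (f : I →ₗ[R] N),
      ∃ g : J →ₗ[R] N, g ∘ₗ Submodule.inclusion hIJ.le = f) :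
    Module.Baer R N := by
  intro I
  induction I using WellFoundedGT.induction with
  | ind I ih =>
  intro f
  obtain rfl | hI := eq_or_ne I ⊤
  · exact ⟨f ∘ₗ Submodule.topEquiv.symm.toLinearMap, fun _ _ ↦ rfl⟩
  · obtain ⟨J, hIJ, -⟩ := exists_covBy_le_of_lt hI.lt_top
    obtain ⟨g, rfl⟩ := h I J hIJ f
    obtain ⟨g', hg'⟩ := ih J hIJ.lt g
    exact ⟨g', fun x hx ↦ hg' x (hIJ.le hx)⟩

theorem IsMininjectiveLeft.injective_of_kaschLeft [IsArtinianRing R] {N : Type u} [AddCommGroup N]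
    [Module R N] (hKasch : KaschLeft.{u, u} R) (hcoh : StronglyMinCoherentLeft R)
    (hN : IsMininjectiveLeft R N) : Module.Injective R N := by
  refine (baer_of_covBy_extension fun I J hIJ f ↦ ?_).injective
  have simple := (covBy_iff_quot_is_simple hIJ.le).mp hIJ
  obtain ⟨K, ⟨e⟩⟩ := hKasch _ simple
  have hK : IsAtom K := isSimpleModule_iff_isAtom.mp (e.isSimpleModule_iff.mp simple)
  let p : J →ₗ[R] K := e.toLinearMap ∘ₗ Submodule.mkQ _
  have exact_p : Function.Exact (Submodule.inclusion hIJ.le) p := by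
    rw [LinearMap.exact_iff, LinearEquiv.ker_comp, Submodule.ker_mkQ, Submodule.range_inclusion]
  have surjective_p : Function.Surjective p := e.surjective.comp (Submodule.mkQ_surjective _)
  exact (hcoh K hK).exists_extension hN (Submodule.inclusion_injective _) surjective_p exact_p f

end Extension

theorem kaschLeft_of_isArtinianRing (R : Type u) [CommRing R] [IsArtinianRing R] :
    KaschLeft.{u, v} R := by
  intro S _ _ hS
  obtain ⟨m, hm, ⟨e⟩⟩ := isSimpleModule_iff_quot_maximal.mp hS
  have annihilator_le : Module.annihilator R R ≤ m :=
    (Module.annihilator_eq_bot.mpr inferInstance).trans_le bot_le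
  have associated : IsAssociatedPrime m R :=
    Module.associatedPrimes.minimalPrimes_annihilator_subset_associatedPrimes R R
      (IsArtinianRing.mem_minimalPrimes annihilator_le)
  obtain ⟨-, i, hi⟩ := (isAssociatedPrime_iff_exists_injective_linearMap m R).mp associated
  exact ⟨LinearMap.range i, ⟨e.trans (LinearEquiv.ofInjective i hi)⟩⟩

/-- For a commutative ring `R`, every mininjective `R`-module is injective
iff `R` is strongly min-coherent and Artinian. -/
theorem comm_mininjective_injective_iff (R : Type u) [CommRing R] :
    (∀ (M : Type u) [AddCommGroup M] [Module R M],
        IsMininjectiveLeft R M → Module.Injective R M) ↔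
      (StronglyMinCoherentLeft R ∧ IsArtinianRing R) := by
  constructor
  · intro h
    exact ⟨fun I _ ↦ isMinProjectiveLeft_of_forall_injective h I,
      isArtinianRing_of_forall_mininjective_injective h⟩
  · rintro ⟨hcoh, _⟩ M _ _ hM
    exact hM.injective_of_kaschLeft (kaschLeft_of_isArtinianRing R) hcoh
end

section
/- Let k be a field, let n ≥ 2, and let R = UT_n(k) be the ring of n × n upper triangular matrices over k. The following statements are equivalent: (1) R is a right almost V-ring; (2) every mininjective right R-module is injective; (3) n = 2. -/
universe u v w v'

open MulOpposite

section RightDefs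
variable (R : Type u) [Ring R]

/-- A right `R`-module (i.e. an `Rᵐᵒᵖ`-module) `M` is mininjective if every homomorphism
from a minimal right ideal `I` of `R` into `M` extends to a homomorphism `R → M`. -/
def IsMininjective (M : Type v) [AddCommGroup M] [Module Rᵐᵒᵖ M] : Prop :=
  ∀ I : Submodule Rᵐᵒᵖ R, IsAtom I → ∀ f : ↥I →ₗ[Rᵐᵒᵖ] M,
    ∃ g : R →ₗ[Rᵐᵒᵖ] M, ∀ x : ↥I, g ↑x = f x

/-- A right `R`-module `M` is min-projective if every short exact sequence
`0 → N → X → M → 0` with `N` mininjective splits (equivalently `Ext¹(M, N) = 0`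
for every mininjective `N`). -/
def IsMinProjective (M : Type v) [AddCommGroup M] [Module Rᵐᵒᵖ M] : Prop :=
  ∀ (X : Type (max u v)) [AddCommGroup X] [Module Rᵐᵒᵖ X] (p : X →ₗ[Rᵐᵒᵖ] M),
    Function.Surjective p → IsMininjective R ↥(LinearMap.ker p) →
      ∃ s : M →ₗ[Rᵐᵒᵖ] X, p ∘ₗ s = LinearMap.id

/-- `R` is right strongly min-coherent if every minimal right ideal of `R` is min-projective. -/
def RightStronglyMinCoherent : Prop :=
  ∀ I : Submodule Rᵐᵒᵖ R, IsAtom I → IsMinProjective R ↥I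

/-- `R` is a right quasi V-ring if every simple right `R`-module which is not isomorphic to
any right ideal of `R` is injective. -/
def RightQuasiVRing : Prop :=
  ∀ (S : Type v) [AddCommGroup S] [Module Rᵐᵒᵖ S], IsSimpleModule Rᵐᵒᵖ S →
    (¬ ∃ I : Submodule Rᵐᵒᵖ R, Nonempty (S ≃ₗ[Rᵐᵒᵖ] ↥I)) → Module.Injective Rᵐᵒᵖ S

/-- `R` is a right GV-ring if every simple right `R`-module is injective or projective. -/
def RightGVRing : Prop :=
  ∀ (S : Type v) [AddCommGroup S] [Module Rᵐᵒᵖ S], IsSimpleModule Rᵐᵒᵖ S →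
    Module.Injective Rᵐᵒᵖ S ∨ Module.Projective Rᵐᵒᵖ S

/-- `R` is right Kasch if every simple right `R`-module is isomorphic to a right ideal of `R`. -/
def RightKasch : Prop :=
  ∀ (S : Type v) [AddCommGroup S] [Module Rᵐᵒᵖ S], IsSimpleModule Rᵐᵒᵖ S →
    ∃ I : Submodule Rᵐᵒᵖ R, Nonempty (S ≃ₗ[Rᵐᵒᵖ] ↥I)

/-- A right `R`-module `M` is almost injective if for every monomorphism `i : A → B` and
every `f : A → M`, either `f` extends to `B`, or there are a nonzero direct summand `D` of
`B` (with projection `π : B → D`) and `h : M → D` with `h ∘ f = π ∘ i`. -/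
def IsAlmostInjective (M : Type v) [AddCommGroup M] [Module Rᵐᵒᵖ M] : Prop :=
  ∀ (A B : Type w) [AddCommGroup A] [AddCommGroup B] [Module Rᵐᵒᵖ A] [Module Rᵐᵒᵖ B]
    (i : A →ₗ[Rᵐᵒᵖ] B), Function.Injective i → ∀ f : A →ₗ[Rᵐᵒᵖ] M,
    (∃ g : B →ₗ[Rᵐᵒᵖ] M, g ∘ₗ i = f) ∨
    (∃ D : Submodule Rᵐᵒᵖ B, D ≠ ⊥ ∧ ∃ π : B →ₗ[Rᵐᵒᵖ] ↥D,
      π ∘ₗ D.subtype = LinearMap.id ∧ ∃ h : M →ₗ[Rᵐᵒᵖ] ↥D, h ∘ₗ f = π ∘ₗ i)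

/-- `R` is a right almost V-ring if every simple right `R`-module is almost injective. -/
def RightAlmostVRing : Prop :=
  ∀ (S : Type v) [AddCommGroup S] [Module Rᵐᵒᵖ S], IsSimpleModule Rᵐᵒᵖ S →
    IsAlmostInjective.{u, v, w} R S

/-- `R` is right serial if `R`, as a right `R`-module, is an internal direct sum of finitely
many uniserial submodules. -/
def RightSerial : Prop :=
  ∃ (n : ℕ) (c : Fin n → Submodule Rᵐᵒᵖ R), DirectSum.IsInternal c ∧
    ∀ i, ∀ N P : Submodule Rᵐᵒᵖ ↥(c i), N ≤ P ∨ P ≤ N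

/-- `R` is left serial if `R`, as a left `R`-module, is an internal direct sum of finitely
many uniserial submodules. -/
def LeftSerial : Prop :=
  ∃ (n : ℕ) (c : Fin n → Submodule R R), DirectSum.IsInternal c ∧
    ∀ i, ∀ N P : Submodule R ↥(c i), N ≤ P ∨ P ≤ N

/-- The square of the Jacobson radical of `R` is zero. -/
def JacobsonSquareZero : Prop :=
  ∀ x ∈ (⊥ : TwoSidedIdeal R).jacobson, ∀ y ∈ (⊥ : TwoSidedIdeal R).jacobson, x * y = 0

end RightDefs

open Matrix in
/-- The ring of `n × n` upper triangular matrices over `k`, as a subring of the matrix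
ring. -/
def upperTriangularRing (n : ℕ) (k : Type u) [Field k] :
    Subring (Matrix (Fin n) (Fin n) k) where
  carrier := {M | M.BlockTriangular (id : Fin n → Fin n)}
  zero_mem' := blockTriangular_zero
  one_mem' := blockTriangular_one
  add_mem' := fun ha hb => ha.add hb
  neg_mem' := fun ha => ha.neg
  mul_mem' := fun ha hb => ha.mul hb

/-!
Over `UT n k` the row vectors form a projective module containing the simple modules as the
subquotients `tail i / tail (i + 1)`, and every minimal right ideal is isomorphic to `tail ⊤`.

If `n = 2`, the proper submodules of the row vectors are `0` and the minimal one. Both the socle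
`lastCol` of the ring and the quotient by it are semisimple, and a homomorphism out of the socle is
determined by one out of a minimal right ideal together with one out of a direct summand, so Baer's
criterion makes mininjective modules injective. In particular the row vectors are injective, and
their minimal submodule is almost injective because an extension into the row vectors either lands
in it or is a split surjection.

If `n ≥ 3`, take a simple `S` on which the matrices act through a diagonal entry that is neither
the first nor the last. No minimal right ideal maps onto `S`, so `S` is mininjective, but the
homomorphism `tail i → S` does not extend to the row vectors, and no projection of the row vectors
onto a nonzero summand factors through it on `tail i`: every nonzero submodule contains `tail ⊤`,
which it kills.
-/

section General

variable {R : Type u} [Ring R]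

theorem isAlmostInjective_of_injective {M : Type v} [AddCommGroup M] [Module Rᵐᵒᵖ M]
    [Small.{v} Rᵐᵒᵖ] [Module.Injective Rᵐᵒᵖ M] : IsAlmostInjective.{u, v, w} R M :=
  fun _ _ _ _ _ _ i hi f => .inl (Module.Injective.extension_property Rᵐᵒᵖ M _ _ i hi f)

theorem isAlmostInjective_of_le_range_or_eq_top {S : Type v} {E : Type v'} [AddCommGroup S]
    [AddCommGroup E] [Module Rᵐᵒᵖ S] [Module Rᵐᵒᵖ E] [Small.{v'} Rᵐᵒᵖ] [Nontrivial E]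
    [Module.Injective Rᵐᵒᵖ E] [Module.Projective Rᵐᵒᵖ E] (j : S →ₗ[Rᵐᵒᵖ] E)
    (hj : Function.Injective j) (hE : ∀ N : Submodule Rᵐᵒᵖ E, N ≤ LinearMap.range j ∨ N = ⊤) :
    IsAlmostInjective.{u, v, w} R S := by
  intro A B _ _ _ _ i hi f
  obtain ⟨g, hg⟩ := Module.Injective.extension_property Rᵐᵒᵖ E _ _ i hi (j ∘ₗ f)
  rcases hE (LinearMap.range g) with hrange | hrange
  · let g' : B →ₗ[Rᵐᵒᵖ] S := (LinearEquiv.ofInjective j hj).symm ∘ₗ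
      g.codRestrict (LinearMap.range j) fun b => hrange (LinearMap.mem_range_self g b)
    have hg' : j ∘ₗ g' = g := by
      ext b
      exact congrArg Subtype.val ((LinearEquiv.ofInjective j hj).apply_symm_apply _)
    refine .inl ⟨g', (LinearMap.cancel_left hj).mp ?_⟩
    rw [← LinearMap.comp_assoc, hg', hg]
  · obtain ⟨s, hs⟩ := Module.projective_lifting_property g LinearMap.id
      (LinearMap.range_eq_top.mp hrange)
    have hgs (e : E) : g (s e) = e := LinearMap.congr_fun hs e
    refine .inr ⟨LinearMap.range s, ?_, s.rangeRestrict ∘ₗ g, ?_, s.rangeRestrict ∘ₗ j, ?_⟩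
    · intro hbot
      obtain ⟨e, he⟩ := exists_ne (0 : E)
      exact he (by rw [← hgs e, LinearMap.range_eq_bot.mp hbot, LinearMap.zero_apply, map_zero])
    · ext ⟨_, e, rfl⟩
      exact congrArg s (hgs e)
    · rw [LinearMap.comp_assoc, LinearMap.comp_assoc, hg]

theorem isMininjective_or_exists_isAtom_linearEquiv {S : Type v} [AddCommGroup S]
    [Module Rᵐᵒᵖ S] [IsSimpleModule Rᵐᵒᵖ S] :
    IsMininjective R S ∨ ∃ I : Submodule Rᵐᵒᵖ R, IsAtom I ∧ Nonempty (S ≃ₗ[Rᵐᵒᵖ] I) := by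
  by_cases! h : ∃ I : Submodule Rᵐᵒᵖ R, IsAtom I ∧ ∃ f : I →ₗ[Rᵐᵒᵖ] S, f ≠ 0
  · obtain ⟨I, hI, f, hf⟩ := h
    have := isSimpleModule_iff_isAtom.mpr hI
    exact .inr ⟨I, hI, ⟨(LinearEquiv.ofBijective f (LinearMap.bijective_of_ne_zero hf)).symm⟩⟩
  · exact .inl fun I hI f => ⟨0, fun x => by rw [h I hI f, LinearMap.zero_apply,
      LinearMap.zero_apply]⟩

theorem exists_comp_eq_of_isSemisimpleModule {X A M : Type*} [AddCommGroup X] [AddCommGroup A]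
    [AddCommGroup M] [Module R X] [Module R A] [Module R M] (L : Submodule R X)
    [IsSemisimpleModule R L] [IsSemisimpleModule R (X ⧸ L)]
    (hL : ∀ f : L →ₗ[R] M, ∃ g : X →ₗ[R] M, g ∘ₗ L.subtype = f)
    (i : A →ₗ[R] X) (hi : Function.Injective i) (f : A →ₗ[R] M) :
    ∃ g : X →ₗ[R] M, g ∘ₗ i = f := by
  let A₀ := L.comap i
  let i₀ : A₀ →ₗ[R] L := i.restrict fun _ ha => ha
  have hi₀ : Function.Injective i₀ := fun a b hab => Subtype.ext (hi (congrArg Subtype.val hab))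
  obtain ⟨f₁, hf₁⟩ := IsSemisimpleModule.extension_property i₀ hi₀ (f ∘ₗ A₀.subtype)
  obtain ⟨g₁, hg₁⟩ := hL f₁
  have hker : A₀ ≤ LinearMap.ker (f - g₁ ∘ₗ i) := by
    intro a ha
    have h₁ : g₁ (i a) = f₁ (i₀ ⟨a, ha⟩) := LinearMap.congr_fun hg₁ (i₀ ⟨a, ha⟩)
    have h₂ : f₁ (i₀ ⟨a, ha⟩) = f a := LinearMap.congr_fun hf₁ ⟨a, ha⟩
    rw [LinearMap.mem_ker, LinearMap.sub_apply, LinearMap.comp_apply, h₁, h₂, sub_self]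
  have hquot : Function.Injective (A₀.mapQ L i le_rfl) :=
    LinearMap.ker_eq_bot.mp (Submodule.ker_liftQ_eq_bot _ _ _ (by simp [A₀, LinearMap.ker_comp]))
  obtain ⟨g₂, hg₂⟩ := IsSemisimpleModule.extension_property _ hquot (A₀.liftQ _ hker)
  refine ⟨g₁ + g₂ ∘ₗ L.mkQ, ?_⟩
  ext a
  have h₂ : g₂ (L.mkQ (i a)) = f a - g₁ (i a) := LinearMap.congr_fun hg₂ (A₀.mkQ a)
  rw [LinearMap.comp_apply, LinearMap.add_apply, LinearMap.comp_apply, h₂, add_sub_cancel]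

theorem injective_of_forall_exists_extend {M : Type v} [AddCommGroup M] [Module Rᵐᵒᵖ M]
    [Small.{v} Rᵐᵒᵖ] (L : Submodule Rᵐᵒᵖ R) [IsSemisimpleModule Rᵐᵒᵖ L]
    [IsSemisimpleModule Rᵐᵒᵖ (R ⧸ L)]
    (hL : ∀ f : L →ₗ[Rᵐᵒᵖ] M, ∃ g : R →ₗ[Rᵐᵒᵖ] M, g ∘ₗ L.subtype = f) :
    Module.Injective Rᵐᵒᵖ M := by
  refine Module.Baer.injective fun I f => ?_
  let e : R ≃ₗ[Rᵐᵒᵖ] Rᵐᵒᵖ := opLinearEquiv Rᵐᵒᵖ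
  obtain ⟨g, hg⟩ := exists_comp_eq_of_isSemisimpleModule L hL (e.symm.toLinearMap ∘ₗ I.subtype)
    (e.symm.injective.comp I.injective_subtype) f
  exact ⟨g ∘ₗ e.symm.toLinearMap, fun x hx => LinearMap.congr_fun hg ⟨x, hx⟩⟩

instance : Module.Projective Rᵐᵒᵖ R := .of_equiv (opLinearEquiv Rᵐᵒᵖ : R ≃ₗ[Rᵐᵒᵖ] Rᵐᵒᵖ).symm

end General

namespace upperTriangularRing

open scoped Matrix

variable {n : ℕ} {k : Type u} [Field k]

local notation "UT" => upperTriangularRing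

/-- The scalar multiple `c • eᵢⱼ` of a matrix unit on or above the diagonal. -/
def single (i j : Fin n) (h : i ≤ j) (c : k) : UT n k :=
  ⟨Matrix.single i j c, Matrix.blockTriangular_single h c⟩

theorem vecMul_apply_of_forall_lt {v : Fin n → k} {i : Fin n} (hv : ∀ j < i, v j = 0)
    (r : UT n k) : (v ᵥ* r.1) i = v i * r.1 i i := by
  refine Finset.sum_eq_single i (fun j _ hj => ?_)
    fun h => absurd (Finset.mem_univ i) h
  rcases hj.lt_or_gt with hlt | hgt
  · exact mul_eq_zero_of_left (hv j hlt) _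
  · exact mul_eq_zero_of_right _ (r.2 hgt)

/-- The character of `UT n k` reading the `i`-th diagonal entry. -/
def diagHom (i : Fin n) : (UT n k)ᵐᵒᵖ →+* k where
  toFun r := (unop r).1 i i
  map_one' := Matrix.one_apply_eq i
  map_zero' := rfl
  map_add' _ _ := rfl
  map_mul' r s :=
    (vecMul_apply_of_forall_lt (fun _ hj => (unop s).2 hj) (unop r)).trans (mul_comm _ _)

variable (k) in
/-- The simple right `UT n k`-module `Sᵢ`: the field `k`, on which a matrix acts through its
`i`-th diagonal entry. -/
def DiagSimple (_i : Fin n) : Type u := k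

namespace DiagSimple

variable (i : Fin n)

instance : AddCommGroup (DiagSimple k i) := inferInstanceAs (AddCommGroup k)

instance : Module k (DiagSimple k i) := inferInstanceAs (Module k k)

instance : Module (UT n k)ᵐᵒᵖ (DiagSimple k i) := Module.compHom (DiagSimple k i) (diagHom i)

variable {i}

theorem op_smul (r : UT n k) (s : DiagSimple k i) : op r • s = r.1 i i • s := rfl

instance : IsSimpleModule (UT n k)ᵐᵒᵖ (DiagSimple k i) := by
  have : RingHomSurjective (diagHom (k := k) i) :=
    ⟨fun c => ⟨op (single i i le_rfl c), Matrix.single_apply_same i i c⟩⟩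
  let toField : DiagSimple k i →ₛₗ[diagHom (k := k) i] k :=
    { toFun := id, map_add' := fun _ _ => rfl, map_smul' := fun _ _ => rfl }
  exact (toField.isSimpleModule_iff_of_bijective Function.bijective_id).mpr inferInstance

end DiagSimple

variable (n k) in
/-- The right `UT n k`-module of row vectors; it is isomorphic to the right ideal `e₁ UT n k`. -/
abbrev RowVector : Type u := Fin n → k

namespace RowVector

scoped instance : Module (UT n k)ᵐᵒᵖ (RowVector n k) where
  smul r v := v ᵥ* (unop r).1
  one_smul := Matrix.vecMul_one
  mul_smul r s v := (Matrix.vecMul_vecMul v (unop s).1 (unop r).1).symm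
  smul_zero _ := Matrix.zero_vecMul _
  smul_add _ v w := Matrix.add_vecMul _ v w
  add_smul r s v := Matrix.vecMul_add (unop r).1 (unop s).1 v
  zero_smul := Matrix.vecMul_zero

theorem op_smul (r : UT n k) (v : RowVector n k) : op r • v = v ᵥ* r.1 := rfl

theorem op_single_smul {i j : Fin n} (h : i ≤ j) (c : k) (v : RowVector n k) :
    op (single i j h c) • v = (Pi.single j (v i * c) : RowVector n k) := by
  ext l
  rcases eq_or_ne l j with rfl | hl
  · simp [op_smul, single, Matrix.vecMul, dotProduct, Matrix.single_apply]
  · simp [op_smul, single, Matrix.vecMul, dotProduct, hl, hl.symm]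

/-- The `i`-th row of a matrix. -/
def row (i : Fin n) : UT n k →ₗ[(UT n k)ᵐᵒᵖ] RowVector n k where
  toFun x := x.1.row i
  map_add' _ _ := rfl
  map_smul' r x := (Matrix.mul_apply_eq_vecMul x.1 (unop r).1 i :)

theorem row_apply (i j : Fin n) (x : UT n k) : row i x j = x.1 i j := rfl

theorem ext_row {x y : UT n k} (h : ∀ i, row i x = row i y) : x = y :=
  Subtype.ext (funext h)

theorem exists_domRestrict_row_ne_zero {I : Submodule (UT n k)ᵐᵒᵖ (UT n k)} (hI : I ≠ ⊥) :
    ∃ i, (row i).domRestrict I ≠ 0 := by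
  by_contra! h
  exact hI (I.eq_bot_iff.mpr fun x hx => ext_row fun i =>
    (LinearMap.congr_fun (h i) ⟨x, hx⟩ : row i x = 0).trans (map_zero (row (k := k) i)).symm)

variable (k) in
/-- The row vectors whose entries before the `i`-th one vanish. -/
def tail (i : Fin n) : Submodule (UT n k)ᵐᵒᵖ (RowVector n k) where
  carrier := {v | ∀ j < i, v j = 0}
  zero_mem' _ _ := rfl
  add_mem' hv hw j hj := (congrArg₂ (· + ·) (hv j hj) (hw j hj)).trans (add_zero 0)
  smul_mem' r v hv j hj :=
    (vecMul_apply_of_forall_lt (fun l hl => hv l (hl.trans hj)) (unop r)).trans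
      (by rw [hv j hj, zero_mul])

theorem row_mem_tail (i : Fin n) (x : UT n k) : row i x ∈ tail k i := fun _ hj => x.2 hj

theorem single_mem_tail {i j : Fin n} (h : i ≤ j) (c : k) :
    (Pi.single j c : RowVector n k) ∈ tail k i :=
  fun _ hl => Pi.single_eq_of_ne (hl.trans_le h).ne _

variable (k) in
/-- The `i`-th entry of a row vector whose previous entries vanish. -/
def tailHead (i : Fin n) : tail k i →ₗ[(UT n k)ᵐᵒᵖ] DiagSimple k i where
  toFun v := v.1 i
  map_add' _ _ := rfl
  map_smul' r v := (vecMul_apply_of_forall_lt v.2 (unop r)).trans (mul_comm _ _)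

section NeZero

variable [NeZero n]

/-- The matrix with a given first row and zeros elsewhere. -/
noncomputable def topRow : RowVector n k →ₗ[(UT n k)ᵐᵒᵖ] UT n k where
  toFun v := ⟨Matrix.vecMulVec (Pi.single ⊥ 1) v, fun i j (hij : j < i) => by
    rw [Matrix.vecMulVec_apply, Pi.single_eq_of_ne (bot_le.trans_lt hij).ne', zero_mul]⟩
  map_add' v w := Subtype.ext (Matrix.vecMulVec_add _ v w)
  map_smul' r v := Subtype.ext (Matrix.vecMulVec_mul _ v (unop r).1).symm

theorem row_bot_topRow :
    Function.LeftInverse (row ⊥) (topRow : RowVector n k →ₗ[(UT n k)ᵐᵒᵖ] UT n k) := by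
  intro v
  ext j
  simp [row_apply, topRow, Matrix.vecMulVec_apply]

instance : Module.Projective (UT n k)ᵐᵒᵖ (RowVector n k) :=
  .of_split topRow (row ⊥) (LinearMap.ext row_bot_topRow)

theorem eq_single_of_mem_tail_top {v : RowVector n k} (hv : v ∈ tail k ⊤) :
    v = (Pi.single ⊤ (v ⊤) : RowVector n k) := by
  ext j
  rcases eq_or_ne j ⊤ with rfl | hj
  · rw [Pi.single_eq_same]
  · rw [Pi.single_eq_of_ne hj, hv j hj.lt_top]

theorem tail_top_le {N : Submodule (UT n k)ᵐᵒᵖ (RowVector n k)} (hN : N ≠ ⊥) :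
    tail k ⊤ ≤ N := by
  obtain ⟨v, hv, hv0⟩ := N.ne_bot_iff.mp hN
  obtain ⟨j, hj⟩ := Function.ne_iff.mp hv0
  intro w hw
  have h := N.smul_mem (op (single j ⊤ le_top ((v j)⁻¹ * w ⊤))) hv
  rwa [op_single_smul, mul_inv_cancel_left₀ hj, ← eq_single_of_mem_tail_top hw] at h

theorem tail_top_ne_bot : tail k (⊤ : Fin n) ≠ ⊥ :=
  (Submodule.ne_bot_iff _).mpr
    ⟨_, single_mem_tail le_rfl (1 : k), Pi.single_ne_zero_iff.mpr one_ne_zero⟩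

theorem isAtom_iff {N : Submodule (UT n k)ᵐᵒᵖ (RowVector n k)} : IsAtom N ↔ N = tail k ⊤ := by
  refine ⟨fun hN => ((hN.le_iff_eq tail_top_ne_bot).mp (tail_top_le hN.1)).symm, ?_⟩
  rintro rfl
  exact isAtom_iff_le_of_ge.mpr ⟨tail_top_ne_bot, fun N hN _ => tail_top_le hN⟩

theorem isAtom_map_topRow_tail_top : IsAtom ((tail k (⊤ : Fin n)).map topRow) := by
  have hinj : Function.Injective (topRow (n := n) (k := k)) := row_bot_topRow.injective
  have : IsSimpleModule (UT n k)ᵐᵒᵖ (tail k (⊤ : Fin n)) :=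
    isSimpleModule_iff_isAtom.mpr (isAtom_iff.mpr rfl)
  exact isSimpleModule_iff_isAtom.mp (.congr ((tail k ⊤).equivMapOfInjective topRow hinj).symm)

theorem eq_top_of_apply_bot_ne_zero {N : Submodule (UT n k)ᵐᵒᵖ (RowVector n k)}
    {v : RowVector n k} (hv : v ∈ N) (hv0 : v ⊥ ≠ 0) : N = ⊤ := by
  refine Submodule.eq_top_iff'.mpr fun w => ?_
  have h : op (topRow ((v ⊥)⁻¹ • w : RowVector n k)) • v = w := by
    change v ᵥ* Matrix.vecMulVec (Pi.single ⊥ 1) ((v ⊥)⁻¹ • w) = w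
    rw [Matrix.vecMul_vecMulVec, dotProduct_single_one, smul_inv_smul₀ hv0]
  exact h ▸ N.smul_mem _ hv

end NeZero

end RowVector

open RowVector

section LastColumn

variable [NeZero n]

variable (n k) in
/-- The right ideal of matrices supported in the last column; it is the socle of `UT n k`. -/
def lastCol : Submodule (UT n k)ᵐᵒᵖ (UT n k) := ⨅ i, (tail k ⊤).comap (row i)

theorem mem_lastCol {x : UT n k} : x ∈ lastCol n k ↔ ∀ i, row i x ∈ tail k ⊤ := by
  simp [lastCol]

instance : IsSemisimpleModule (UT n k)ᵐᵒᵖ (lastCol n k) := by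
  let column : lastCol n k →ₗ[(UT n k)ᵐᵒᵖ] Fin n → DiagSimple k (⊤ : Fin n) :=
    LinearMap.pi fun i => tailHead k ⊤ ∘ₗ (row i).restrict fun x hx => mem_lastCol.mp hx i
  refine IsSemisimpleModule.of_injective column fun x y hxy => Subtype.ext (ext_row fun i => ?_)
  rw [eq_single_of_mem_tail_top (mem_lastCol.mp x.2 i),
    eq_single_of_mem_tail_top (mem_lastCol.mp y.2 i)]
  exact congrArg (Pi.single (M := fun _ => k) ⊤) (congrFun hxy i)

theorem le_lastCol_of_isAtom {I : Submodule (UT n k)ᵐᵒᵖ (UT n k)} (hI : IsAtom I) :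
    I ≤ lastCol n k := by
  have := isSimpleModule_iff_isAtom.mpr hI
  refine le_iInf fun i x hx => ?_
  rcases ((row i).domRestrict I).injective_or_eq_zero with hinj | hzero
  · have hrange : IsAtom (LinearMap.range ((row i).domRestrict I)) :=
      isSimpleModule_iff_isAtom.mp (.congr (LinearEquiv.ofInjective _ hinj).symm)
    exact isAtom_iff.mp hrange ▸ LinearMap.mem_range_self ((row i).domRestrict I) ⟨x, hx⟩
  · have hx0 : row i x = 0 := LinearMap.congr_fun hzero ⟨x, hx⟩
    rw [Submodule.mem_comap, hx0]
    exact (tail k ⊤).zero_mem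

theorem mul_single_top_top {x : UT n k} (hx : x ∈ lastCol n k) :
    x * single ⊤ ⊤ le_rfl (1 : k) = x := by
  refine ext_row fun i => ?_
  have h : row i (x * single ⊤ ⊤ le_rfl (1 : k)) = op (single ⊤ ⊤ le_rfl (1 : k)) • row i x :=
    (row i).map_smul (op (single ⊤ ⊤ le_rfl (1 : k))) x
  rw [h, op_single_smul, mul_one, ← eq_single_of_mem_tail_top (mem_lastCol.mp hx i)]

theorem op_single_top_smul_apply {M : Type*} [AddCommGroup M] [Module (UT n k)ᵐᵒᵖ M]
    {I : Submodule (UT n k)ᵐᵒᵖ (UT n k)} (hI : IsAtom I) (f : I →ₗ[(UT n k)ᵐᵒᵖ] M) (x : I) :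
    op (single (⊤ : Fin n) ⊤ le_rfl (1 : k)) • f x = f x := by
  rw [← map_smul]
  exact congrArg f (Subtype.ext (mul_single_top_top (le_lastCol_of_isAtom hI x.2)))

theorem isMininjective_diagSimple {i : Fin n} (hi : i ≠ ⊤) :
    IsMininjective (UT n k) (DiagSimple k i) := by
  refine fun I hI f => ⟨0, fun x => ?_⟩
  have hii : (single (⊤ : Fin n) ⊤ le_rfl (1 : k)).1 i i = 0 :=
    Matrix.single_apply_of_row_ne hi.symm ⊤ i 1
  rw [← op_single_top_smul_apply hI f x, DiagSimple.op_smul, hii, zero_smul, LinearMap.zero_apply]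

theorem not_isAlmostInjective_diagSimple {i : Fin n} (hbot : i ≠ ⊥) (htop : i ≠ ⊤) :
    ¬ IsAlmostInjective.{u, u, u} (UT n k) (DiagSimple k i) := by
  intro h
  rcases h _ _ (tail k i).subtype (tail k i).injective_subtype (tailHead k i) with
    ⟨g, hg⟩ | ⟨D, hD, π, hπ, p, hp⟩
  · have hone : g (Pi.single i 1 : RowVector n k) = (1 : k) :=
      (LinearMap.congr_fun hg ⟨Pi.single i 1, single_mem_tail le_rfl 1⟩).trans
        (Pi.single_eq_same (M := fun _ => k) i 1)
    have hzero : g (Pi.single i 1 : RowVector n k) = 0 := by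
      have hii : (single ⊥ i bot_le (1 : k)).1 i i = 0 :=
        Matrix.single_apply_of_row_ne hbot.symm i i 1
      have hsmul := g.map_smul (op (single ⊥ i bot_le (1 : k))) (Pi.single ⊥ 1 : RowVector n k)
      rwa [op_single_smul, Pi.single_eq_same, mul_one, DiagSimple.op_smul, hii, zero_smul]
        at hsmul
    exact one_ne_zero (α := k) (hone.symm.trans hzero)
  · let w : tail k i := ⟨Pi.single ⊤ 1, single_mem_tail le_top 1⟩
    have hw : w.1 ∈ D := tail_top_le hD (single_mem_tail le_rfl 1)
    have hπw : π w = ⟨w, hw⟩ := LinearMap.congr_fun hπ ⟨w, hw⟩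
    have hpw : p (tailHead k i w) = π w := LinearMap.congr_fun hp w
    have hhead : tailHead k i w = 0 := Pi.single_eq_of_ne htop 1
    rw [hhead, map_zero, hπw] at hpw
    exact Pi.single_ne_zero_iff.mpr one_ne_zero (congrArg Subtype.val hpw).symm

theorem isMininjective_rowVector : IsMininjective (UT n k) (RowVector n k) := by
  intro I hI f
  have := isSimpleModule_iff_isAtom.mpr hI
  obtain ⟨i, hi⟩ := exists_domRestrict_row_ne_zero hI.1
  obtain ⟨x, hx⟩ : ∃ x : I, row i x.1 ≠ 0 := DFunLike.ne_iff.mp hi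
  have hx0 : x ≠ 0 := fun h => hx (h ▸ map_zero (row i))
  have hrow := eq_single_of_mem_tail_top (mem_lastCol.mp (le_lastCol_of_isAtom hI x.2) i)
  have hi' : row i x.1 ⊤ ≠ 0 := fun h => hx (by rw [hrow, h, Pi.single_zero])
  let v : RowVector n k := Pi.single i (f x ⊤ / row i x.1 ⊤)
  let g : UT n k →ₗ[(UT n k)ᵐᵒᵖ] RowVector n k :=
    LinearMap.toSpanSingleton _ _ v ∘ₗ (opLinearEquiv (UT n k)ᵐᵒᵖ).toLinearMap
  have hgx : g x = f x := by
    have hfx : f x = (Pi.single ⊤ (f x ⊤) : RowVector n k) := by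
      simpa only [op_single_smul, mul_one] using (op_single_top_smul_apply hI f x).symm
    calc g x = (f x ⊤ / row i x.1 ⊤) • row i x.1 := Matrix.single_vecMul x.1.1 i _
      _ = Pi.single ⊤ (f x ⊤) := by
        rw [hrow, ← Pi.single_smul, Pi.single_eq_same, smul_eq_mul, div_mul_cancel₀ _ hi']
      _ = f x := hfx.symm
  have hext : g ∘ₗ I.subtype = f :=
    LinearMap.ext_on (IsSimpleModule.span_singleton_eq_top _ hx0) (by simpa using hgx)
  exact ⟨g, LinearMap.congr_fun hext⟩

end LastColumn

section Two

theorem mem_tail_top_two {v : RowVector 2 k} : v ∈ tail k ⊤ ↔ v ⊥ = 0 :=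
  ⟨fun hv => hv ⊥ bot_lt_top,
    fun hv => Fin.forall_fin_two.mpr ⟨fun _ => hv, fun h => absurd h (lt_irrefl _)⟩⟩

theorem mem_lastCol_two {x : UT 2 k} : x ∈ lastCol 2 k ↔ row ⊥ x ⊥ = 0 :=
  mem_lastCol.trans <| Fin.forall_fin_two.trans <|
    (and_iff_left (row_mem_tail 1 x)).trans mem_tail_top_two

instance : IsSimpleModule (UT 2 k)ᵐᵒᵖ (UT 2 k ⧸ lastCol 2 k) := by
  let entry : UT 2 k →ₗ[(UT 2 k)ᵐᵒᵖ] DiagSimple k (⊥ : Fin 2) :=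
    tailHead k ⊥ ∘ₗ (row ⊥).codRestrict (tail k ⊥) (row_mem_tail ⊥)
  have hsurj : Function.Surjective entry := fun c =>
    ⟨single ⊥ ⊥ le_rfl c, Matrix.single_apply_same (α := k) (⊥ : Fin 2) (⊥ : Fin 2) c⟩
  have hker : LinearMap.ker entry = lastCol 2 k := by
    ext x
    exact (mem_lastCol_two (k := k)).symm
  rw [isSimpleModule_iff_isCoatom, ← hker]
  exact LinearMap.isCoatom_ker_of_surjective hsurj

theorem exists_extend_lastCol_two {M : Type v} [AddCommGroup M]
    [Module (UT 2 k)ᵐᵒᵖ M] (hM : IsMininjective (UT 2 k) M)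
    (f : lastCol 2 k →ₗ[(UT 2 k)ᵐᵒᵖ] M) :
    ∃ g : UT 2 k →ₗ[(UT 2 k)ᵐᵒᵖ] M, g ∘ₗ (lastCol 2 k).subtype = f := by
  let I := (tail k (⊤ : Fin 2)).map topRow
  have hI : IsAtom I := isAtom_map_topRow_tail_top
  have hIL : I ≤ lastCol 2 k := le_lastCol_of_isAtom hI
  obtain ⟨g, hg⟩ := hM I hI (f ∘ₗ Submodule.inclusion hIL)
  let top : Module.End (UT 2 k)ᵐᵒᵖ (UT 2 k) := topRow ∘ₗ row ⊥
  let bottom : Module.End (UT 2 k)ᵐᵒᵖ (UT 2 k) := LinearMap.id - top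
  have hbottom (x : UT 2 k) : bottom x ∈ lastCol 2 k := by
    have hrow : row ⊥ (x - topRow (row ⊥ x)) = 0 := by rw [map_sub, row_bot_topRow, sub_self]
    exact mem_lastCol_two.mpr (congrFun hrow ⊥)
  refine ⟨g ∘ₗ top + f ∘ₗ bottom.codRestrict _ hbottom, LinearMap.ext fun x => ?_⟩
  have htop : top x.1 ∈ I := Submodule.mem_map_of_mem (mem_lastCol.mp x.2 ⊥)
  calc g (top x) + f ⟨bottom x, hbottom x⟩
      = f ⟨top x, hIL htop⟩ + f ⟨bottom x, hbottom x⟩ := congrArg (· + _) (hg ⟨top x, htop⟩)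
    _ = f x := by rw [← map_add]; exact congrArg f (Subtype.ext (add_sub_cancel _ _))

theorem injective_of_isMininjective_two {M : Type u} [AddCommGroup M] [Module (UT 2 k)ᵐᵒᵖ M]
    (hM : IsMininjective (UT 2 k) M) : Module.Injective (UT 2 k)ᵐᵒᵖ M :=
  injective_of_forall_exists_extend (R := UT 2 k) (lastCol 2 k)
    (exists_extend_lastCol_two hM)

theorem isAlmostInjective_of_isSimpleModule_two {S : Type u} [AddCommGroup S] [Module (UT 2 k)ᵐᵒᵖ S]
    [IsSimpleModule (UT 2 k)ᵐᵒᵖ S] : IsAlmostInjective.{u, u, u} (UT 2 k) S := by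
  rcases isMininjective_or_exists_isAtom_linearEquiv (R := UT 2 k) (S := S) with
    hS | ⟨I, hI, ⟨e⟩⟩
  · have : Module.Injective (UT 2 k)ᵐᵒᵖ S := injective_of_isMininjective_two hS
    exact isAlmostInjective_of_injective (R := UT 2 k)
  · have := isSimpleModule_iff_isAtom.mpr hI
    obtain ⟨i, hi⟩ := exists_domRestrict_row_ne_zero hI.1
    let j : S →ₗ[(UT 2 k)ᵐᵒᵖ] RowVector 2 k := (row i).domRestrict I ∘ₗ e.toLinearMap
    have hj : j ≠ 0 := fun h =>
      hi ((LinearMap.cancel_right e.surjective).mp (h.trans (LinearMap.zero_comp _).symm))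
    have : Module.Injective (UT 2 k)ᵐᵒᵖ (RowVector 2 k) :=
      injective_of_isMininjective_two isMininjective_rowVector
    refine isAlmostInjective_of_le_range_or_eq_top (R := UT 2 k) j
      (LinearMap.injective_of_ne_zero hj) fun N => ?_
    by_cases hN : N ≤ tail k ⊤
    · exact .inl (hN.trans (tail_top_le (LinearMap.range_eq_bot.not.mpr hj)))
    · obtain ⟨v, hv, hv'⟩ := SetLike.not_le_iff_exists.mp hN
      exact .inr (eq_top_of_apply_bot_ne_zero hv (mem_tail_top_two.not.mp hv'))

end Two

end upperTriangularRing

/-- For `R = UT_n(k)` (`n ≥ 2`, `k` a field) the following are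
equivalent: (1) `R` is a right almost V-ring; (2) every mininjective right `R`-module is
injective; (3) `n = 2`. -/
theorem upperTriangular_tfae (k : Type u) [Field k] (n : ℕ) (hn : 2 ≤ n) :
    List.TFAE
      [ RightAlmostVRing.{u, u, u} ↥(upperTriangularRing n k),
        ∀ (M : Type u) [AddCommGroup M] [Module (↥(upperTriangularRing n k))ᵐᵒᵖ M],
          IsMininjective (↥(upperTriangularRing n k)) M →
            Module.Injective (↥(upperTriangularRing n k))ᵐᵒᵖ M,
        n = 2 ] := by
  have : NeZero n := ⟨by omega⟩
  have exists_middle (hn2 : n ≠ 2) : ∃ i : Fin n, i ≠ ⊥ ∧ i ≠ ⊤ :=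
    ⟨⟨1, by omega⟩, Fin.ne_of_val_ne one_ne_zero, Fin.ne_of_lt (show 1 < n - 1 by omega)⟩
  tfae_have 3 → 1 := by
    rintro rfl S _ _ _
    exact upperTriangularRing.isAlmostInjective_of_isSimpleModule_two
  tfae_have 3 → 2 := by
    rintro rfl M _ _ hM
    exact upperTriangularRing.injective_of_isMininjective_two hM
  tfae_have 1 → 3 := fun h => by
    by_contra hn2
    obtain ⟨i, hbot, htop⟩ := exists_middle hn2
    exact upperTriangularRing.not_isAlmostInjective_diagSimple hbot htop
      (h (upperTriangularRing.DiagSimple k i) inferInstance)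
  tfae_have 2 → 3 := fun h => by
    by_contra hn2
    obtain ⟨i, hbot, htop⟩ := exists_middle hn2
    have := h (upperTriangularRing.DiagSimple k i)
      (upperTriangularRing.isMininjective_diagSimple htop)
    exact upperTriangularRing.not_isAlmostInjective_diagSimple hbot htop
      (isAlmostInjective_of_injective (R := upperTriangularRing n k))
  tfae_finish
end
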